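/- Let q ≥ 2, n ≥ 2, gcd(d,q) = 1, let o_n = (O,0^n) be the generalized prefer-opposite sequence, and let β be coprime to q. Then in the sequence D_β(o_n), every (n−1)-word over A occurs exactly q times as a contiguous window, except the all-zero word 0^{n−1}, which occurs exactly once (at the beginning). -/

import Mathlib

/-!
Write `m = n - 1`. The greedy sequence is a walk in the de Bruijn graph whose vertices are the
`m`-words and whose edges are the `n`-words; it starts at `0^m` with the loop `0^n` and never uses
an edge twice. The core of the proof is that the edges used by `o_n` are exactly `0^n` and all
nonconstant `n`-words.

* A loop `c^n` with `c ≠ 0` is never used: it is the last choice at `c^m`, so before its use all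
  `q - 1` other edges out of `c^m` are used, and being at `c^m` then requires `q` nonloop edges into
  it.
* The walk halts when all edges out of its last vertex are used. By flow balance that vertex is
  `0^m`, so in- and out-degrees agree at every vertex, and all edges out of and into `0^m` are used.
* The least preferred edge out of `v b` is `v b b`. If it is used, then so are all edges out of
  `v b`, and hence all edges into `v b`. Therefore, if all nonloop edges into `c^m` are used,
  extending words backwards from `c^m` shows that all nonconstant `n`-words ending in `c` are used.
* One of these is `(c + d)^m c`, the next to last choice at `(c + d)^m`. So all nonloop edges out of
  `(c + d)^m` are used, and by balance all nonloop edges into it. As `d` generates the integers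
  modulo `q`, every digit is reached from the digit `0`.

Finally, the `m`-windows of `D_β(o_n)` are the images of the `n`-windows of `o_n`. Each `m`-word has
exactly `q` preimages, one for each first digit, and the preimages of `0^m` are the constant words,
of which only `0^n` is a window of `o_n`.
-/

namespace PaperDB

/-- The last `s` entries of `l`. -/
def lastN {α : Type*} (s : ℕ) (l : List α) : List α := l.drop (l.length - s)

/-- The digit appended by the greedy rule, if any: the most preferred digit `c`
(according to the preference function `P`, evaluated at the last `s` digits,
`P x 0` being the most preferred digit) such that the `n`-window created by
appending `c` has not yet occurred as a contiguous subword. -/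
def nextDigit (q s n : ℕ) (P : List (ZMod q) → Fin q → ZMod q)
    (l : List (ZMod q)) : Option (ZMod q) :=
  ((List.finRange q).map (fun i => P (lastN s l) i)).find?
    (fun c => !decide ((lastN (n - 1) l ++ [c]) <:+: l))

/-- Fuel-bounded greedy extension. -/
def greedyAux (q s n : ℕ) (P : List (ZMod q) → Fin q → ZMod q) :
    ℕ → List (ZMod q) → List (ZMod q)
  | 0, l => l
  | f + 1, l =>
    match nextDigit q s n P l with
    | none => l
    | some c => greedyAux q s n P f (l ++ [c])

/-- The greedy sequence `(P, I)`: fuel `q ^ n` provably suffices for the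
construction to halt, since every `n`-word occurs at most once. -/
def greedy (q s n : ℕ) (P : List (ZMod q) → Fin q → ZMod q)
    (I : List (ZMod q)) : List (ZMod q) :=
  greedyAux q s n P (q ^ n) I

/-- The number of occurrences of `w` as a length-`n` contiguous window of `l`. -/
def windowCount (q n : ℕ) (w l : List (ZMod q)) : ℕ :=
  ((List.range (l.length + 1 - n)).filter
    (fun i => decide ((l.drop i).take n = w))).length

/-- `P` is a preference function (of span `s`): it assigns to every `s`-word a
permutation of the alphabet `ZMod q`. -/
def IsPrefFun (q s : ℕ) (P : List (ZMod q) → Fin q → ZMod q) : Prop :=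
  ∀ x : List (ZMod q), x.length = s → Function.Bijective (P x)

/-- The generalized prefer-opposite preference function `O^{(q,d)}`, of span 1:
`O_j(a) = a + j·d (mod q)` for `j = 1,…,q`; the `Fin q`-index `j` denotes column `j+1`. -/
def OprefL (q d : ℕ) : List (ZMod q) → Fin q → ZMod q :=
  fun x j => x.headI + (((j : ℕ) + 1 : ℕ) : ZMod q) * (d : ZMod q)

/-- The generalized prefer-opposite sequence `o_n = (O, 0^n)`. -/
def oSeq (q n d : ℕ) : List (ZMod q) :=
  greedy q 1 n (OprefL q d) (List.replicate n 0)

/-- The generalized Lempel homomorphism `D_β`: it sends `(x_0,…,x_{L-1})` to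
`(β(x_1-x_0), …, β(x_{L-1}-x_{L-2}))`, arithmetic modulo `q`. -/
def Dmap (q : ℕ) (β : ZMod q) (l : List (ZMod q)) : List (ZMod q) :=
  List.zipWith (fun x y => β * (y - x)) l l.tail

/-! ### Windows of a list -/

section Windows

variable {α : Type*} {m n s : ℕ} {l v w : List α}

/-- The contiguous windows of length `n` of `l`, from left to right and with repetition. -/
def windows (n : ℕ) (l : List α) : List (List α) :=
  (List.range (l.length + 1 - n)).map fun i => (l.drop i).take n

lemma length_windows : (windows n l).length = l.length + 1 - n := by
  simp only [windows, List.length_map, List.length_range]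

lemma windows_of_length_eq (h : l.length = n) : windows n l = [l] := by
  simp [windows, ← h]

lemma mem_windows : w ∈ windows n l ↔ w.length = n ∧ w <:+: l := by
  simp only [windows, List.mem_map, List.mem_range]
  constructor
  · rintro ⟨i, hi, rfl⟩
    refine ⟨?_, (List.take_prefix _ _).isInfix.trans (List.drop_suffix _ _).isInfix⟩
    rw [List.length_take, List.length_drop]
    omega
  · rintro ⟨rfl, p, t, rfl⟩
    refine ⟨p.length, ?_, by simp⟩
    simp only [List.length_append]
    omega

lemma length_lastN (h : m ≤ l.length) : (lastN m l).length = m := by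
  rw [lastN, List.length_drop]
  omega

lemma lastN_lastN (h : s ≤ m) : lastN s (lastN m l) = lastN s l := by
  rw [lastN, lastN, lastN, List.length_drop, List.drop_drop]
  congr 1
  omega

lemma windows_eq_cons (h : m ≤ l.length) :
    windows m l = l.take m :: (windows (m + 1) l).map List.tail := by
  have hlen : l.length + 1 - m = l.length + 1 - (m + 1) + 1 := by omega
  simp [windows, hlen, List.range_succ_eq_map, List.tail_take_eq_take_tail]

lemma windows_eq_append (h : m ≤ l.length) :
    windows m l = (windows (m + 1) l).map List.dropLast ++ [lastN m l] := by
  have hlen : l.length + 1 - m = l.length + 1 - (m + 1) + 1 := by omega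
  rw [windows, hlen, List.range_succ, List.map_append, windows, List.map_map]
  congr 1
  · refine List.map_congr_left fun i hi => ?_
    rw [List.mem_range] at hi
    rw [Function.comp_apply, List.dropLast_eq_take, List.take_take, List.length_take,
      List.length_drop]
    congr 1
    omega
  · rw [List.map_singleton, lastN, List.take_of_length_le (by rw [List.length_drop]; omega)]
    congr 2
    omega

lemma windows_append_singleton (h : m ≤ l.length) (c : α) :
    windows (m + 1) (l ++ [c]) = windows (m + 1) l ++ [lastN m l ++ [c]] := by
  have hlen : (l ++ [c]).length + 1 - (m + 1) = l.length + 1 - (m + 1) + 1 := by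
    rw [List.length_append, List.length_singleton]
    omega
  rw [windows, hlen, List.range_succ, List.map_append, windows]
  congr 1
  · refine List.map_congr_left fun i hi => ?_
    rw [List.mem_range] at hi
    rw [List.drop_append_of_le_length (by omega),
      List.take_append_of_le_length (by rw [List.length_drop]; omega)]
  · have hi : l.length + 1 - (m + 1) = l.length - m := by omega
    rw [List.map_singleton, hi, List.drop_append_of_le_length (by omega), lastN,
      List.take_of_length_le]
    simp only [List.length_append, List.length_drop, List.length_singleton]
    omega

lemma infix_append_singleton_iff (h : m ≤ l.length) (hw : w.length = m + 1) {c : α} :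
    w <:+: l ++ [c] ↔ w <:+: l ∨ w = lastN m l ++ [c] := by
  have key : w ∈ windows (m + 1) (l ++ [c]) ↔ w ∈ windows (m + 1) l ∨ w = lastN m l ++ [c] := by
    rw [windows_append_singleton h, List.mem_append, List.mem_singleton]
  simpa only [mem_windows, hw, true_and] using key

lemma length_windows_le_of_nodup [Fintype α] (h : (windows n l).Nodup) :
    (windows n l).length ≤ Fintype.card α ^ n := by
  classical
  calc (windows n l).length = (windows n l).toFinset.card := (List.toFinset_card_of_nodup h).symm
    _ ≤ (Finset.univ.image (List.Vector.toList : List.Vector α n → List α)).card := by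
        refine Finset.card_le_card fun w hw => ?_
        obtain ⟨hlen, -⟩ := mem_windows.1 (List.mem_toFinset.1 hw)
        exact Finset.mem_image.2 ⟨⟨w, hlen⟩, Finset.mem_univ _, rfl⟩
    _ ≤ Fintype.card (List.Vector α n) := Finset.card_image_le
    _ = Fintype.card α ^ n := card_vector n

end Windows

/-! ### Flow balance in the de Bruijn graph -/

section Flow

lemma count_map_eq_card {ι β γ : Type*} [BEq γ] [LawfulBEq γ] {L : List β} (hL : L.Nodup)
    {f : β → γ} {c : γ} {t : Finset ι} {g : ι → β} (hg : Function.Injective g)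
    (h : ∀ x, x ∈ L ∧ f x = c ↔ ∃ i ∈ t, g i = x) : (L.map f).count c = t.card := by
  classical
  have hfiber : (L.filter ((· == c) ∘ f)).toFinset = t.image g := by
    ext x
    simp only [List.mem_toFinset, List.mem_filter, Function.comp_apply, beq_iff_eq,
      Finset.mem_image, h]
  rw [← Finset.card_image_of_injective t hg, ← hfiber, List.toFinset_card_of_nodup (hL.filter _),
    List.count, List.countP_map, List.countP_eq_length_filter]

variable {α : Type*} [Fintype α] [DecidableEq α] {m : ℕ} {l v : List α}

/-- The digits that follow an occurrence of `v` in `l`: the edges out of the vertex `v` of the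
de Bruijn graph that are used by the walk `l`. -/
def successors (l v : List α) : Finset α := {c | v ++ [c] <:+: l}

/-- The digits that precede an occurrence of `v` in `l`: the edges into the vertex `v` of the
de Bruijn graph that are used by the walk `l`. -/
def predecessors (l v : List α) : Finset α := {a | a :: v <:+: l}

lemma mem_successors {c : α} : c ∈ successors l v ↔ v ++ [c] <:+: l := by
  rw [successors, Finset.mem_filter_univ]

lemma mem_predecessors {a : α} : a ∈ predecessors l v ↔ a :: v <:+: l := by
  rw [predecessors, Finset.mem_filter_univ]

lemma count_map_tail_windows (hl : (windows (m + 1) l).Nodup) (hv : v.length = m) :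
    ((windows (m + 1) l).map List.tail).count v = (predecessors l v).card := by
  refine count_map_eq_card hl (g := (· :: v)) (fun _ _ h => List.head_eq_of_cons_eq h) fun x => ?_
  simp only [mem_windows, mem_predecessors]
  constructor
  · rintro ⟨⟨hlen, hx⟩, rfl⟩
    have := List.cons_head_tail (List.ne_nil_of_length_eq_add_one hlen)
    exact ⟨_, this.symm ▸ hx, this⟩
  · rintro ⟨a, ha, rfl⟩
    exact ⟨⟨by rw [List.length_cons, hv], ha⟩, rfl⟩

lemma count_map_dropLast_windows (hl : (windows (m + 1) l).Nodup) (hv : v.length = m) :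
    ((windows (m + 1) l).map List.dropLast).count v = (successors l v).card := by
  refine count_map_eq_card hl (g := fun c => v ++ [c]) (fun _ _ h => by simpa using h) fun x => ?_
  simp only [mem_windows, mem_successors]
  constructor
  · rintro ⟨⟨hlen, hx⟩, rfl⟩
    have := List.dropLast_append_getLast (List.ne_nil_of_length_eq_add_one hlen)
    exact ⟨_, this.symm ▸ hx, this⟩
  · rintro ⟨c, hc, rfl⟩
    exact ⟨⟨by rw [List.length_append, List.length_singleton, hv], hc⟩, List.dropLast_concat⟩

lemma card_predecessors_add_ite (hl : (windows (m + 1) l).Nodup) (hm : m ≤ l.length)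
    (hv : v.length = m) :
    (predecessors l v).card + (if l.take m = v then 1 else 0) =
      (successors l v).card + if lastN m l = v then 1 else 0 := by
  have hcons : (windows m l).count v = _ := congrArg (List.count v) (windows_eq_cons hm)
  have happend : (windows m l).count v = _ := congrArg (List.count v) (windows_eq_append hm)
  rw [List.count_cons, count_map_tail_windows hl hv] at hcons
  rw [List.count_append, count_map_dropLast_windows hl hv, List.count_singleton] at happend
  simpa only [beq_iff_eq] using hcons.symm.trans happend

lemma predecessors_replicate_subset {a : α} (h : ¬ List.replicate (m + 1) a <:+: l) :
    predecessors l (List.replicate m a) ⊆ Finset.univ.erase a := by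
  intro x hx
  refine Finset.mem_erase.2 ⟨?_, Finset.mem_univ x⟩
  rintro rfl
  exact h (mem_predecessors.1 hx)

end Flow

/-! ### Greedy sequences -/

section Greedy

variable {q s m n : ℕ} {P : List (ZMod q) → Fin q → ZMod q} {I l u v : List (ZMod q)} {c : ZMod q}

lemma nextDigit_eq_some (h : nextDigit q s (m + 1) P l = some c) :
    ¬ lastN m l ++ [c] <:+: l ∧
      ∃ i, P (lastN s l) i = c ∧ ∀ j < i, lastN m l ++ [P (lastN s l) j] <:+: l := by
  rw [nextDigit, List.find?_eq_some_iff_getElem] at h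
  obtain ⟨hnew, i, hi, hic, hlt⟩ := h
  rw [List.length_map, List.length_finRange] at hi
  refine ⟨by simpa using hnew, ⟨i, hi⟩, by simpa using hic, fun j hj => ?_⟩
  simpa using hlt j hj

lemma nextDigit_eq_none (hP : IsPrefFun q s P) (hs : s ≤ l.length)
    (h : nextDigit q s (m + 1) P l = none) (c : ZMod q) : lastN m l ++ [c] <:+: l := by
  obtain ⟨i, rfl⟩ := (hP _ (length_lastN hs)).surjective c
  rw [nextDigit, List.find?_eq_none] at h
  simpa using h _ (List.mem_map_of_mem (List.mem_finRange i))

/-- The words through which the greedy construction of `(P, I)` passes. -/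
inductive IsGreedyStage (q s n : ℕ) (P : List (ZMod q) → Fin q → ZMod q) (I : List (ZMod q)) :
    List (ZMod q) → Prop
  | start : IsGreedyStage q s n P I I
  | step {l : List (ZMod q)} {c : ZMod q} (h : IsGreedyStage q s n P I l)
      (hc : nextDigit q s n P l = some c) : IsGreedyStage q s n P I (l ++ [c])

namespace IsGreedyStage

lemma greedyAux (h : IsGreedyStage q s n P I l) (f : ℕ) :
    IsGreedyStage q s n P I (greedyAux q s n P f l) := by
  induction f generalizing l with
  | zero => exact h
  | succ f ih =>
    rw [PaperDB.greedyAux]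
    split
    · exact h
    · next hc => exact ih (h.step hc)

lemma isPrefix (h : IsGreedyStage q s n P I l) : I <+: l := by
  induction h with
  | start => exact List.prefix_rfl
  | step _ _ ih => exact ih.trans (List.prefix_append _ _)

lemma take_eq (h : IsGreedyStage q s n P I l) (hI : m ≤ I.length) : l.take m = I.take m := by
  obtain ⟨t, rfl⟩ := h.isPrefix
  exact List.take_append_of_le_length hI

lemma windows_nodup (h : IsGreedyStage q s (m + 1) P I l) (hI : m ≤ I.length)
    (hnd : (windows (m + 1) I).Nodup) : (windows (m + 1) l).Nodup := by
  induction h with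
  | start => exact hnd
  | step h hc ih =>
    rw [windows_append_singleton (hI.trans h.isPrefix.length_le), ← List.concat_eq_append,
      List.nodup_concat]
    exact ⟨fun hmem => (nextDigit_eq_some hc).1 (mem_windows.1 hmem).2, ih⟩

lemma infix_of_le (h : IsGreedyStage q s (m + 1) P I l) (hP : IsPrefFun q s P) (hs : s ≤ m)
    (hI : m ≤ I.length) (hu : u.length = m) {i j : Fin q} (hji : j ≤ i)
    (hnot : ¬ u ++ [P (lastN s u) i] <:+: I) (hi : u ++ [P (lastN s u) i] <:+: l) :
    u ++ [P (lastN s u) j] <:+: l := by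
  induction h with
  | start => exact absurd hi hnot
  | @step l c h hc ih =>
    have hl : m ≤ l.length := hI.trans h.isPrefix.length_le
    have hlen (a : ZMod q) : (u ++ [a]).length = m + 1 := by
      rw [List.length_append, List.length_singleton, hu]
    rw [infix_append_singleton_iff hl (hlen _)]
    rcases (infix_append_singleton_iff hl (hlen _)).1 hi with hi | hi
    · exact .inl (ih hi)
    obtain ⟨rfl, rfl⟩ := List.append_singleton_inj.1 hi
    obtain ⟨-, k, hk, hlt⟩ := nextDigit_eq_some hc
    rw [lastN_lastN hs] at hk ⊢
    obtain rfl : k = i := (hP _ (length_lastN (hs.trans hl))).injective hk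
    rcases hji.lt_or_eq with hjk | rfl
    · exact .inl (hlt j hjk)
    · exact .inr rfl

variable [NeZero q]

/-- If the loop at the vertex `a^m` is its least preferred edge, then using the loop requires
all other edges out of `a^m` to have been used, and so `q` visits to `a^m` although only `q - 1`
edges other than the loop lead there. -/
lemma not_replicate_infix (h : IsGreedyStage q s (m + 1) P I l) (hP : IsPrefFun q s P)
    (hs : s ≤ m) (hI : m ≤ I.length) (hnd : (windows (m + 1) I).Nodup) {a : ZMod q}
    (hlast : ∀ i, P (List.replicate s a) i = a → ∀ j, j ≤ i)
    (hstart : I.take m ≠ List.replicate m a) (hnot : ¬ List.replicate (m + 1) a <:+: I) :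
    ¬ List.replicate (m + 1) a <:+: l := by
  induction h with
  | start => exact hnot
  | @step l c h hc ih =>
    have hl : m ≤ l.length := hI.trans h.isPrefix.length_le
    rw [infix_append_singleton_iff hl List.length_replicate, not_or]
    refine ⟨ih, fun hloop => ?_⟩
    rw [List.replicate_succ', List.append_singleton_inj] at hloop
    obtain ⟨hvertex, rfl⟩ := hloop
    have hend : lastN s l = List.replicate s a := by
      rw [← lastN_lastN hs, ← hvertex, lastN, List.length_replicate, List.drop_replicate]
      congr 1
      omega
    have hpred := predecessors_replicate_subset ih
    have hsucc : Finset.univ.erase a ⊆ successors l (List.replicate m a) := fun y hy => by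
      obtain ⟨-, i, hi, hlt⟩ := nextDigit_eq_some hc
      rw [hend] at hi hlt
      obtain ⟨j, rfl⟩ := (hP (List.replicate s a) List.length_replicate).surjective y
      rw [mem_successors, hvertex]
      refine hlt j ((hlast i hi j).lt_of_ne ?_)
      rintro rfl
      exact Finset.ne_of_mem_erase hy hi
    have hflow := card_predecessors_add_ite (h.windows_nodup hI hnd) hl
      (List.length_replicate (n := m) (a := a))
    rw [h.take_eq hI, if_neg hstart, if_pos hvertex.symm] at hflow
    have := Finset.card_le_card hpred
    have := Finset.card_le_card hsucc
    omega

/-- A halted walk has used all `q` edges out of its last vertex; had it not started there, it would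
have entered that vertex `q + 1` times. -/
lemma lastN_eq_take (h : IsGreedyStage q s (m + 1) P I l) (hP : IsPrefFun q s P) (hs : s ≤ m)
    (hI : m ≤ I.length) (hnd : (windows (m + 1) I).Nodup)
    (hhalt : nextDigit q s (m + 1) P l = none) : lastN m l = I.take m := by
  have hl : m ≤ l.length := hI.trans h.isPrefix.length_le
  have hflow := card_predecessors_add_ite (h.windows_nodup hI hnd) hl (length_lastN hl)
  have hsucc : successors l (lastN m l) = Finset.univ := Finset.eq_univ_of_forall fun c =>
    mem_successors.2 (nextDigit_eq_none hP (hs.trans hl) hhalt c)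
  have hpred := Finset.card_le_univ (predecessors l (lastN m l))
  rw [hsucc, Finset.card_univ, h.take_eq hI, if_pos rfl] at hflow
  by_contra hne
  rw [if_neg (Ne.symm hne)] at hflow
  omega

lemma card_predecessors_eq_card_successors (h : IsGreedyStage q s (m + 1) P I l)
    (hP : IsPrefFun q s P) (hs : s ≤ m) (hI : m ≤ I.length) (hnd : (windows (m + 1) I).Nodup)
    (hhalt : nextDigit q s (m + 1) P l = none) (hv : v.length = m) :
    (predecessors l v).card = (successors l v).card := by
  have hflow := card_predecessors_add_ite (h.windows_nodup hI hnd)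
    (hI.trans h.isPrefix.length_le) hv
  rw [h.lastN_eq_take hP hs hI hnd hhalt, h.take_eq hI] at hflow
  exact Nat.add_right_cancel hflow

end IsGreedyStage

lemma isGreedyStage_greedy : IsGreedyStage q s n P I (greedy q s n P I) :=
  IsGreedyStage.start.greedyAux _

lemma nextDigit_greedyAux_eq_none_or_length_eq (f : ℕ) (l : List (ZMod q)) :
    nextDigit q s n P (greedyAux q s n P f l) = none ∨
      (greedyAux q s n P f l).length = l.length + f := by
  induction f generalizing l with
  | zero => exact .inr rfl
  | succ f ih =>
    rw [greedyAux]
    split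
    · next hnone => exact .inl hnone
    · next c _ =>
      refine (ih (l ++ [c])).imp_right fun hlen => ?_
      rw [hlen, List.length_append, List.length_singleton]
      omega

/-- The fuel `q ^ (m + 1)` cannot run out, because the windows of a stage are distinct. -/
lemma nextDigit_greedy [NeZero q] (hI : m + 1 ≤ I.length) (hnd : (windows (m + 1) I).Nodup) :
    nextDigit q s (m + 1) P (greedy q s (m + 1) P I) = none := by
  refine (nextDigit_greedyAux_eq_none_or_length_eq _ I).resolve_right fun hlen => ?_
  have hle := length_windows_le_of_nodup
    ((isGreedyStage_greedy (P := P) (s := s)).windows_nodup (Nat.le_of_succ_le hI) hnd)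
  rw [length_windows, greedy, hlen, ZMod.card] at hle
  omega

end Greedy

/-! ### The prefer-opposite sequence -/

section PreferOpposite

variable {q d m : ℕ}

lemma isPrefFun_OprefL [NeZero q] (hd : d.Coprime q) : IsPrefFun q 1 (OprefL q d) := by
  intro x hx
  obtain ⟨a, rfl⟩ := List.length_eq_one_iff.1 hx
  have hunit : IsUnit (d : ZMod q) := (ZMod.isUnit_iff_coprime d q).2 hd
  rw [Fintype.bijective_iff_injective_and_card, Fintype.card_fin, ZMod.card]
  refine ⟨fun i j hij => ?_, rfl⟩
  have hcast := hunit.mul_right_cancel (add_left_cancel hij)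
  rw [Nat.cast_succ, Nat.cast_succ, add_left_inj, ZMod.natCast_eq_natCast_iff',
    Nat.mod_eq_of_lt i.isLt, Nat.mod_eq_of_lt j.isLt] at hcast
  exact Fin.ext hcast

lemma OprefL_rev (a : ZMod q) (k : Fin q) :
    OprefL q d [a] k.rev = a - (k : ℕ) * d := by
  have hk : (k.rev : ℕ) + 1 = q - k := by rw [Fin.val_rev]; omega
  rw [OprefL, List.headI, hk, Nat.cast_sub k.isLt.le, ZMod.natCast_self]
  ring

lemma exists_eq_sub_mul [NeZero q] (hd : d.Coprime q) (a b : ZMod q) :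
    ∃ k : Fin q, b = a - (k : ℕ) * d := by
  obtain ⟨i, rfl⟩ := (isPrefFun_OprefL hd [a] rfl).surjective b
  exact ⟨i.rev, by rw [← OprefL_rev, Fin.rev_rev]⟩

lemma lastN_one_append_singleton {α : Type*} (v : List α) (b : α) : lastN 1 (v ++ [b]) = [b] := by
  simp [lastN]

lemma windows_replicate_nodup {α : Type*} (n : ℕ) (a : α) :
    (windows n (List.replicate n a)).Nodup := by
  rw [windows_of_length_eq List.length_replicate]
  exact List.nodup_singleton _

lemma isGreedyStage_oSeq (n : ℕ) :
    IsGreedyStage q 1 n (OprefL q d) (List.replicate n 0) (oSeq q n d) :=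
  isGreedyStage_greedy

lemma windows_oSeq_nodup : (windows (m + 1) (oSeq q (m + 1) d)).Nodup :=
  (isGreedyStage_oSeq (m + 1)).windows_nodup (by simp) (windows_replicate_nodup _ _)

lemma replicate_succ_not_infix_oSeq [NeZero q] (hm : 1 ≤ m) (hd : d.Coprime q) {c : ZMod q}
    (hc : c ≠ 0) : ¬ List.replicate (m + 1) c <:+: oSeq q (m + 1) d := by
  have hP := isPrefFun_OprefL hd
  refine (isGreedyStage_oSeq (m + 1)).not_replicate_infix hP hm (by simp)
    (windows_replicate_nodup _ _) (fun i hi j => ?_) ?_ fun hinfix => ?_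
  · obtain rfl : i = Fin.rev 0 := (hP [c] rfl).injective <| by
      rw [OprefL_rev, Fin.val_zero, Nat.cast_zero, zero_mul, sub_zero]
      exact hi
    exact Fin.le_rev_iff.2 (Fin.zero_le _)
  · rw [List.take_replicate, min_eq_left (Nat.le_succ m), Ne, List.replicate_right_inj (by omega)]
    exact hc.symm
  · have heq := hinfix.eq_of_length (by rw [List.length_replicate, List.length_replicate])
    exact hc ((List.replicate_right_inj m.succ_ne_zero).1 heq)

section Halted

variable [NeZero q]

lemma card_predecessors_oSeq (hm : 1 ≤ m) (hd : d.Coprime q)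
    {v : List (ZMod q)} (hv : v.length = m) :
    (predecessors (oSeq q (m + 1) d) v).card = (successors (oSeq q (m + 1) d) v).card :=
  (isGreedyStage_oSeq (m + 1)).card_predecessors_eq_card_successors (isPrefFun_OprefL hd) hm
    (by simp) (windows_replicate_nodup _ _)
    (nextDigit_greedy (by simp) (windows_replicate_nodup _ _)) hv

lemma replicate_zero_append_infix_oSeq (hm : 1 ≤ m) (hd : d.Coprime q) (c : ZMod q) :
    List.replicate m 0 ++ [c] <:+: oSeq q (m + 1) d := by
  have hhalt : nextDigit q 1 (m + 1) (OprefL q d) (oSeq q (m + 1) d) = none :=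
    nextDigit_greedy (by simp) (windows_replicate_nodup _ _)
  have hstage := isGreedyStage_oSeq (q := q) (d := d) (m + 1)
  have hlast := hstage.lastN_eq_take (isPrefFun_OprefL hd) hm (by simp)
    (windows_replicate_nodup _ _) hhalt
  rw [List.take_replicate, min_eq_left (Nat.le_succ m)] at hlast
  have hlen : 1 ≤ (oSeq q (m + 1) d).length := by
    have := hstage.isPrefix.length_le
    rw [List.length_replicate] at this
    omega
  exact hlast ▸ nextDigit_eq_none (isPrefFun_OprefL hd) hlen hhalt c

lemma cons_infix_oSeq_of_forall_append (hm : 1 ≤ m) (hd : d.Coprime q)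
    {v : List (ZMod q)} (hv : v.length = m)
    (h : ∀ c, v ++ [c] <:+: oSeq q (m + 1) d) (a : ZMod q) : a :: v <:+: oSeq q (m + 1) d := by
  have hsucc : successors (oSeq q (m + 1) d) v = Finset.univ :=
    Finset.eq_univ_of_forall fun c => mem_successors.2 (h c)
  have hpred : predecessors (oSeq q (m + 1) d) v = Finset.univ := by
    rw [← Finset.card_eq_iff_eq_univ, card_predecessors_oSeq hm hd hv, hsucc, Finset.card_univ]
  exact mem_predecessors.1 (hpred ▸ Finset.mem_univ a)

lemma cons_replicate_zero_infix_oSeq (hm : 1 ≤ m) (hd : d.Coprime q) (a : ZMod q) :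
    a :: List.replicate m 0 <:+: oSeq q (m + 1) d :=
  cons_infix_oSeq_of_forall_append hm hd List.length_replicate
    (replicate_zero_append_infix_oSeq hm hd) a

/-- The digits following `v b` are preferred in the order `b + d, b + 2 d, …, b - d, b`. -/
lemma append_sub_mul_infix_oSeq (hd : d.Coprime q) {v : List (ZMod q)} {b : ZMod q}
    (hv : v.length + 1 = m) {j k : Fin q} (hjk : j ≤ k)
    (h : v ++ [b] ++ [b - (j : ℕ) * (d : ZMod q)] <:+: oSeq q (m + 1) d) :
    v ++ [b] ++ [b - (k : ℕ) * (d : ZMod q)] <:+: oSeq q (m + 1) d := by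
  have hm : 1 ≤ m := by omega
  have hlen : (v ++ [b]).length = m := by rw [List.length_append, List.length_singleton, hv]
  by_cases hzero : v ++ [b] = List.replicate m 0
  · rw [hzero]
    exact replicate_zero_append_infix_oSeq hm hd _
  have hpref (i : Fin q) : b - (i : ℕ) * (d : ZMod q) = OprefL q d (lastN 1 (v ++ [b])) i.rev := by
    rw [lastN_one_append_singleton, OprefL_rev]
  rw [hpref] at h ⊢
  refine (isGreedyStage_oSeq (m + 1)).infix_of_le (isPrefFun_OprefL hd) hm (by simp) hlen
    (Fin.rev_le_rev.2 hjk) (fun hinfix => hzero ?_) h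
  have heq := hinfix.eq_of_length (by
    rw [List.length_append, hlen, List.length_singleton, List.length_replicate])
  rw [List.replicate_succ', List.append_singleton_inj] at heq
  exact heq.1

/-- As the digit `b` is the least preferred one after `v b`, once it is used all edges out of `v b`
are used, and hence all edges into `v b`. -/
lemma cons_infix_oSeq_of_repeat (hd : d.Coprime q) {v : List (ZMod q)} {b : ZMod q}
    (hv : v.length + 1 = m) (h : v ++ [b] ++ [b] <:+: oSeq q (m + 1) d) (a : ZMod q) :
    a :: (v ++ [b]) <:+: oSeq q (m + 1) d := by
  refine cons_infix_oSeq_of_forall_append (by omega) hd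
    (by rw [List.length_append, List.length_singleton, hv]) (fun c => ?_) a
  obtain ⟨k, rfl⟩ := exists_eq_sub_mul hd b c
  exact append_sub_mul_infix_oSeq hd hv (Fin.zero_le k) (by simpa using h)

lemma append_replicate_infix_oSeq (hd : d.Coprime q) {c : ZMod q}
    (hc : ∀ x, x ≠ c → x :: List.replicate m c <:+: oSeq q (m + 1) d) (y : List (ZMod q)) (k : ℕ)
    (hlen : y.length + k = m) (hne : y ++ List.replicate (k + 1) c ≠ List.replicate (m + 1) c) :
    y ++ List.replicate (k + 1) c <:+: oSeq q (m + 1) d := by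
  induction y generalizing k with
  | nil =>
    obtain rfl : k = m := by simpa using hlen
    exact absurd rfl hne
  | cons a y ih =>
    rw [List.length_cons] at hlen
    have hsplit (i : ℕ) : y ++ List.replicate (i + 1) c = y ++ List.replicate i c ++ [c] := by
      rw [List.replicate_succ', List.append_assoc]
    by_cases hconst : y ++ List.replicate (k + 1 + 1) c = List.replicate (m + 1) c
    · rw [hsplit (k + 1), List.replicate_succ' (n := m), List.append_singleton_inj] at hconst
      rw [List.cons_append, hconst.1] at hne ⊢
      exact hc a fun hac => hne (by rw [hac, List.replicate_succ])
    · have hrepeat := ih (k + 1) (by omega) hconst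
      rw [hsplit, hsplit] at hrepeat
      rw [List.cons_append, hsplit]
      refine cons_infix_oSeq_of_repeat hd ?_ hrepeat a
      rw [List.length_append, List.length_replicate]
      omega

/-- Once the next to last choice `c - d` at `c^m` is used, all `q - 1` edges out of `c^m` other
than the loop are used, hence so are all `q - 1` edges other than the loop into `c^m`. -/
lemma cons_replicate_infix_oSeq_of_sub (hm : 1 ≤ m) (hd : d.Coprime q) {c : ZMod q}
    (h : List.replicate m c ++ [c - d] <:+: oSeq q (m + 1) d) {x : ZMod q} (hx : x ≠ c) :
    x :: List.replicate m c <:+: oSeq q (m + 1) d := by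
  obtain ⟨k, rfl⟩ := Nat.exists_eq_add_of_le' hm
  rcases eq_or_ne c 0 with rfl | hc0
  · exact cons_replicate_zero_infix_oSeq hm hd x
  have : Nontrivial (ZMod q) := ⟨x, c, hx⟩
  have hq : 1 < q := Nat.one_lt_iff_ne_zero_and_ne_one.2 ⟨NeZero.ne q, ZMod.nontrivial_iff.1 this⟩
  have hpred := predecessors_replicate_subset (replicate_succ_not_infix_oSeq hm hd hc0)
  have hsucc : Finset.univ.erase c ⊆
      successors (oSeq q (k + 1 + 1) d) (List.replicate (k + 1) c) := fun y hy => by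
    obtain ⟨i, rfl⟩ := exists_eq_sub_mul hd c y
    have hi : (⟨1, hq⟩ : Fin q) ≤ i := Nat.one_le_iff_ne_zero.2 fun hi =>
      Finset.ne_of_mem_erase hy (by rw [hi, Nat.cast_zero, zero_mul, sub_zero])
    rw [mem_successors]
    rw [List.replicate_succ'] at h ⊢
    exact append_sub_mul_infix_oSeq hd (by rw [List.length_replicate]) hi (by simpa using h)
  have heq := Finset.eq_of_subset_of_card_le hpred <|
    (Finset.card_le_card hsucc).trans (card_predecessors_oSeq hm hd List.length_replicate).ge
  exact mem_predecessors.1 (heq ▸ Finset.mem_erase.2 ⟨hx, Finset.mem_univ x⟩)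

lemma cons_replicate_infix_oSeq (hm : 1 ≤ m) (hd : d.Coprime q) {c x : ZMod q} (hx : x ≠ c) :
    x :: List.replicate m c <:+: oSeq q (m + 1) d := by
  have hunit : IsUnit (d : ZMod q) := (ZMod.isUnit_iff_coprime d q).2 hd
  have : Nontrivial (ZMod q) := ⟨x, c, hx⟩
  have key (t : ℕ) : ∀ x : ZMod q, x ≠ t * d →
      x :: List.replicate m (t * d : ZMod q) <:+: oSeq q (m + 1) d := by
    induction t with
    | zero =>
      intro x _
      rw [Nat.cast_zero, zero_mul]
      exact cons_replicate_zero_infix_oSeq hm hd x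
    | succ t ih =>
      intro x hx
      refine cons_replicate_infix_oSeq_of_sub hm hd ?_ hx
      have hsub : ((t + 1 : ℕ) : ZMod q) * d - d = t * d := by push_cast; ring
      rw [hsub]
      refine append_replicate_infix_oSeq hd ih _ 0 (by simp) fun hconst => ?_
      rw [List.replicate_one, List.replicate_succ' (n := m), List.append_singleton_inj,
        List.replicate_right_inj (by omega)] at hconst
      exact hunit.ne_zero (by linear_combination hconst.1 - hsub)
  obtain ⟨t, rfl⟩ : ∃ t : ℕ, (t : ZMod q) * d = c := ⟨(c * (d : ZMod q)⁻¹).val, by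
    rw [ZMod.natCast_zmod_val, mul_assoc, ZMod.inv_mul_of_unit _ hunit, mul_one]⟩
  exact key t x hx

theorem infix_oSeq_iff (hm : 1 ≤ m) (hd : d.Coprime q) {w : List (ZMod q)}
    (hw : w.length = m + 1) :
    w <:+: oSeq q (m + 1) d ↔ ∀ c, c ≠ 0 → w ≠ List.replicate (m + 1) c := by
  refine ⟨fun hinfix c hc hwc => replicate_succ_not_infix_oSeq hm hd hc (hwc ▸ hinfix),
    fun hw0 => ?_⟩
  obtain ⟨y, c, rfl⟩ := List.eq_nil_or_concat' w |>.resolve_left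
    (List.ne_nil_of_length_eq_add_one hw)
  by_cases hconst : y ++ [c] = List.replicate (m + 1) c
  · obtain rfl : c = 0 := by_contra fun hc => hw0 c hc hconst
    rw [hconst, List.replicate_succ']
    exact replicate_zero_append_infix_oSeq hm hd 0
  · exact append_replicate_infix_oSeq hd (fun _ => cons_replicate_infix_oSeq hm hd) y 0
      (by simpa using hw) hconst

end Halted

end PreferOpposite

/-! ### The difference map -/

section Dmap

variable {q m : ℕ}

lemma length_Dmap (β : ZMod q) (l : List (ZMod q)) : (Dmap q β l).length = l.length - 1 := by
  simp [Dmap]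

lemma drop_Dmap (β : ZMod q) (i : ℕ) (l : List (ZMod q)) :
    (Dmap q β l).drop i = Dmap q β (l.drop i) := by
  rw [Dmap, Dmap, List.drop_zipWith, List.tail_drop_eq_drop_tail]

lemma take_Dmap (β : ZMod q) (m : ℕ) (l : List (ZMod q)) :
    (Dmap q β l).take m = Dmap q β (l.take (m + 1)) := by
  rw [Dmap, Dmap, List.tail_take_eq_take_tail, Nat.add_sub_cancel]
  refine List.ext_getElem (by grind) fun i _ _ => ?_
  simp

lemma Dmap_replicate (β : ZMod q) (m : ℕ) (c : ZMod q) :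
    Dmap q β (List.replicate (m + 1) c) = List.replicate m 0 := by
  simp [Dmap]

lemma windows_Dmap (β : ZMod q) {l : List (ZMod q)} (hl : l ≠ []) :
    windows m (Dmap q β l) = (windows (m + 1) l).map (Dmap q β) := by
  have hlen : l.length - 1 + 1 - m = l.length + 1 - (m + 1) := by
    have := List.length_pos_iff.2 hl
    omega
  rw [windows, windows, List.map_map, length_Dmap, hlen]
  refine List.map_congr_left fun i _ => ?_
  rw [drop_Dmap, take_Dmap, Function.comp_apply]

/-- The word with first digit `a` that `D_β` maps to `w`. -/
def primitive (β : (ZMod q)ˣ) (a : ZMod q) (w : List (ZMod q)) : List (ZMod q) :=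
  w.scanl (fun x y => x + ↑β⁻¹ * y) a

lemma length_primitive (β : (ZMod q)ˣ) (a : ZMod q) (w : List (ZMod q)) :
    (primitive β a w).length = w.length + 1 :=
  List.length_scanl

lemma primitive_injective (β : (ZMod q)ˣ) (w : List (ZMod q)) :
    Function.Injective fun a => primitive β a w := by
  intro a b h
  simpa [primitive] using congrArg List.head? h

lemma Dmap_primitive (β : (ZMod q)ˣ) (a : ZMod q) (w : List (ZMod q)) :
    Dmap q β (primitive β a w) = w := by
  induction w generalizing a with
  | nil => rfl
  | cons y w ih =>
    cases w with
    | nil => simp [primitive, Dmap]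
    | cons z w => simpa [primitive, Dmap] using ih (a + ↑β⁻¹ * y)

lemma primitive_Dmap (β : (ZMod q)ˣ) (a : ZMod q) (t : List (ZMod q)) :
    primitive β a (Dmap q β (a :: t)) = a :: t := by
  induction t generalizing a with
  | nil => rfl
  | cons b t ih =>
    simpa [primitive, Dmap] using ih b

lemma Dmap_eq_iff (β : (ZMod q)ˣ) {x w : List (ZMod q)} (hx : x ≠ []) :
    Dmap q β x = w ↔ ∃ a, primitive β a w = x := by
  constructor
  · rintro rfl
    obtain ⟨a, t, rfl⟩ := List.exists_cons_of_ne_nil hx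
    exact ⟨a, primitive_Dmap β a t⟩
  · rintro ⟨a, rfl⟩
    exact Dmap_primitive β a w

lemma primitive_eq_replicate_iff (β : (ZMod q)ˣ) {a c : ZMod q} {w : List (ZMod q)}
    (hw : w.length = m) :
    primitive β a w = List.replicate (m + 1) c ↔ w = List.replicate m 0 ∧ a = c := by
  constructor
  · intro h
    refine ⟨?_, by simpa [primitive, List.replicate_succ] using congrArg List.head? h⟩
    rw [← Dmap_primitive β a w, h, Dmap_replicate]
  · rintro ⟨rfl, rfl⟩
    rw [← Dmap_replicate β m a, List.replicate_succ, primitive_Dmap]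

lemma windowCount_eq_count (n : ℕ) (w l : List (ZMod q)) :
    windowCount q n w l = (windows n l).count w := by
  rw [windowCount, windows, List.count, List.countP_map, List.countP_eq_length_filter]
  congr 2
  funext i
  exact (beq_eq_decide _ _).symm

lemma windowCount_Dmap [NeZero q] (β : (ZMod q)ˣ) {l w : List (ZMod q)} (hl : l ≠ [])
    (hnd : (windows (m + 1) l).Nodup) (hw : w.length = m) :
    windowCount q m w (Dmap q β l) =
      (Finset.univ.filter fun a => primitive β a w <:+: l).card := by
  rw [windowCount_eq_count, windows_Dmap _ hl]
  refine count_map_eq_card hnd (primitive_injective β w) fun x => ?_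
  rw [mem_windows]
  simp only [Finset.mem_filter_univ]
  constructor
  · rintro ⟨⟨hlen, hx⟩, hD⟩
    obtain ⟨a, rfl⟩ := (Dmap_eq_iff β (List.ne_nil_of_length_eq_add_one hlen)).1 hD
    exact ⟨a, hx, rfl⟩
  · rintro ⟨a, ha, rfl⟩
    exact ⟨⟨by rw [length_primitive, hw], ha⟩, Dmap_primitive β a w⟩

end Dmap

lemma primitive_infix_oSeq_iff {q m d : ℕ} [NeZero q] (hm : 1 ≤ m) (hd : d.Coprime q)
    (β : (ZMod q)ˣ) {a : ZMod q} {w : List (ZMod q)} (hw : w.length = m) :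
    primitive β a w <:+: oSeq q (m + 1) d ↔ (w = List.replicate m 0 → a = 0) := by
  rw [infix_oSeq_iff hm hd (by rw [length_primitive, hw])]
  simp only [ne_eq, primitive_eq_replicate_iff β hw]
  grind

/-- For `β` coprime to `q`, in the sequence `D_β(o_n)`
every `(n-1)`-word occurs exactly `q` times as a contiguous window, except the
all-zero word `0^{n-1}`, which occurs exactly once — at the beginning. -/
theorem Dmap_oSeq_window_counts (q n d β : ℕ) (hq : 2 ≤ q) (hn : 2 ≤ n)
    (hd : Nat.Coprime d q) (hβ : Nat.Coprime β q) :
    (∀ w : List (ZMod q), w.length = n - 1 →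
      windowCount q (n - 1) w (Dmap q (β : ZMod q) (oSeq q n d)) =
        if w = List.replicate (n - 1) (0 : ZMod q) then 1 else q) ∧
    List.replicate (n - 1) (0 : ZMod q) <+: Dmap q (β : ZMod q) (oSeq q n d) := by
  have : NeZero q := ⟨by omega⟩
  obtain ⟨m, rfl⟩ := Nat.exists_eq_add_of_le' (Nat.le_of_succ_le hn)
  obtain ⟨u, hu⟩ := (ZMod.isUnit_iff_coprime β q).2 hβ
  rw [← hu, Nat.add_sub_cancel]
  have hstart := (isGreedyStage_oSeq (q := q) (d := d) (m + 1)).isPrefix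
  refine ⟨fun w hw => ?_, ?_⟩
  · have hne : oSeq q (m + 1) d ≠ [] := by
      intro h
      simp [h] at hstart
    rw [windowCount_Dmap u hne windows_oSeq_nodup hw]
    simp only [primitive_infix_oSeq_iff (Nat.le_of_succ_le_succ hn) hd u hw]
    split_ifs with hw0
    · simp [hw0, Finset.filter_eq']
    · simp [hw0, ZMod.card]
  · rw [List.prefix_iff_eq_take, List.length_replicate] at hstart ⊢
    rw [take_Dmap, ← hstart, Dmap_replicate]

end PaperDB
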